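/- For all t-matrices X ∈ C^{D₁×D₂} and Y ∈ C^{D₂×D₃}: rank(X) + rank(Y) − D₂·E_T ≤ rank(X ∘ Y) ≤ min(rank(X), rank(Y)), where ∘ is t-matrix multiplication, ≤ is the partial order on nonnegative t-scalars (the left inequality asserted after adding D₂·E_T to both sides, i.e., rank(X) + rank(Y) ≤ rank(X ∘ Y) + D₂·E_T), and min of two nonnegative t-scalars is taken Fourier-entrywise. -/

import Mathlib

open scoped BigOperators
open scoped Classical

noncomputable section

variable {N : ℕ}

/-- The underlying group `G = ZMod I₁ × ⋯ × ZMod I_N`. -/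
abbrev G (I : Fin N → ℕ) : Type := ∀ n : Fin N, ZMod (I n)

/-- A t-scalar is a function `G → ℂ`. -/
abbrev TS (I : Fin N → ℕ) : Type := G I → ℂ

variable {I : Fin N → ℕ} [∀ n, NeZero (I n)]

/-- Circular convolution product of t-scalars. -/
def tconv (X Y : TS I) : TS I := fun i => ∑ j, X (i - j) * Y j

/-- The zero t-scalar. -/
def ZT : TS I := fun _ => 0

/-- The identity t-scalar: the indicator function of `0 ∈ G`. -/
def ET : TS I := fun i => if i = 0 then 1 else 0

/-- The Fourier transform of a t-scalar:
`F(X)(i) = Σ_j X(j)·exp(2π√−1·Σ_n i_n·j_n / I_n)`. -/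
def tfourier (X : TS I) : TS I :=
  fun i => ∑ j, X j * Complex.exp (2 * Real.pi * Complex.I *
      ∑ n, ((i n).val : ℂ) * ((j n).val : ℂ) / ((I n : ℕ) : ℂ))

/-- Conjugate of a t-scalar: `conj(X)(i) = complex conjugate of X(−i)`. -/
def tconj (X : TS I) : TS I := fun i => starRingEnd ℂ (X (-i))

/-- A t-scalar is self-conjugate if `X = conj(X)`. -/
def SelfConj (X : TS I) : Prop := X = tconj X

/-- Real part `Re(X) = 2⁻¹(X + conj X)` of a t-scalar. -/
def tRe (X : TS I) : TS I := fun i => (X i + tconj X i) / 2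

/-- Imaginary part `Im(X) = (2√−1)⁻¹(X − conj X)` of a t-scalar. -/
def tIm (X : TS I) : TS I := fun i => (X i - tconj X i) / (2 * Complex.I)

/-- A t-scalar is nonnegative if it is `Y ∘ Y` for some self-conjugate `Y`. -/
def TNonneg (X : TS I) : Prop := ∃ Y : TS I, SelfConj Y ∧ X = tconv Y Y

/-- A t-scalar is invertible if `X ∘ Y = E_T` for some `Y`. -/
def TInv (X : TS I) : Prop := ∃ Y : TS I, tconv X Y = ET

/-- t-matrix multiplication: entrywise convolution products. -/
def tmul {a b c : ℕ} (A : Matrix (Fin a) (Fin b) (TS I)) (B : Matrix (Fin b) (Fin c) (TS I)) :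
    Matrix (Fin a) (Fin c) (TS I) :=
  Matrix.of fun α γ => ∑ β, tconv (A α β) (B β γ)

/-- Conjugate transpose of a t-matrix. -/
def htrans {a b : ℕ} (A : Matrix (Fin a) (Fin b) (TS I)) : Matrix (Fin b) (Fin a) (TS I) :=
  Matrix.of fun β α => tconj (A α β)

/-- The identity t-matrix. -/
def tId (Q : ℕ) : Matrix (Fin Q) (Fin Q) (TS I) :=
  Matrix.of fun α β => if α = β then ET else ZT

/-- Diagonal t-matrix with the given t-scalar diagonal entries. -/
def tdiag {Q : ℕ} (lam : Fin Q → TS I) : Matrix (Fin Q) (Fin Q) (TS I) :=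
  Matrix.of fun k l => if k = l then lam k else ZT

/-- The `i`-th Fourier fslice of a t-matrix. -/
def fslice {a b : ℕ} (A : Matrix (Fin a) (Fin b) (TS I)) (i : G I) :
    Matrix (Fin a) (Fin b) ℂ :=
  Matrix.of fun α β => tfourier (A α β) i

/-- Frobenius norm of a complex matrix. -/
def frob {a b : ℕ} (M : Matrix (Fin a) (Fin b) ℂ) : ℝ :=
  Real.sqrt (∑ α, ∑ β, Complex.normSq (M α β))

/-- The kernel of the Fourier transform of t-scalars is the product of the standard additive
characters of the factors `ZMod (I n)`. -/
theorem exp_sum_val_eq_prod_stdAddChar (i j : G I) :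
    Complex.exp (2 * Real.pi * Complex.I *
      ∑ n, ((i n).val : ℂ) * ((j n).val : ℂ) / ((I n : ℕ) : ℂ)) =
      ∏ n, ZMod.stdAddChar (i n * j n) := by
  rw [Finset.mul_sum, Complex.exp_sum]
  refine Finset.prod_congr rfl fun n _ => ?_
  have h : i n * j n = (((i n).val * (j n).val : ℤ) : ZMod (I n)) := by simp
  rw [h, ZMod.stdAddChar_coe]
  push_cast
  ring_nf

theorem tfourier_apply (X : TS I) (i : G I) :
    tfourier X i = ∑ j, X j * ∏ n, ZMod.stdAddChar (i n * j n) := by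
  simp only [tfourier, exp_sum_val_eq_prod_stdAddChar]

/-- The convolution theorem for t-scalars. -/
theorem tfourier_tconv (X Y : TS I) (i : G I) :
    tfourier (tconv X Y) i = tfourier X i * tfourier Y i := by
  simp only [tfourier_apply, tconv, Finset.sum_mul]
  simp only [Finset.mul_sum]
  rw [Finset.sum_comm]
  conv_rhs => rw [Finset.sum_comm]
  refine Finset.sum_congr rfl fun k _ => ?_
  refine Fintype.sum_equiv (Equiv.subRight k) _ _ fun j => ?_
  have h : ∏ n, ZMod.stdAddChar (i n * j n) =
      (∏ n, ZMod.stdAddChar (i n * (j - k) n)) * ∏ n, ZMod.stdAddChar (i n * k n) := by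
    rw [← Finset.prod_mul_distrib]
    refine Finset.prod_congr rfl fun n _ => ?_
    rw [← AddChar.map_add_eq_mul, ← mul_add, Pi.sub_apply, sub_add_cancel]
  rw [h, Equiv.subRight_apply]
  ring

theorem tfourier_sum {ι : Type*} (s : Finset ι) (f : ι → TS I) (i : G I) :
    tfourier (∑ b ∈ s, f b) i = ∑ b ∈ s, tfourier (f b) i := by
  simp only [tfourier, Finset.sum_apply, Finset.sum_mul]
  exact Finset.sum_comm

theorem fslice_tmul {a b c : ℕ} (A : Matrix (Fin a) (Fin b) (TS I))
    (B : Matrix (Fin b) (Fin c) (TS I)) (i : G I) :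
    fslice (tmul A B) i = fslice A i * fslice B i := by
  ext α γ
  simp only [fslice, tmul, Matrix.of_apply, Matrix.mul_apply, tfourier_sum, tfourier_tconv]

/-- Sylvester's rank inequality. -/
theorem Matrix.rank_add_rank_le_rank_mul_add_card {K l m n : Type*} [Field K] [Fintype m]
    [Fintype n] [Finite l] (A : Matrix l m K) (B : Matrix m n K) :
    A.rank + B.rank ≤ (A * B).rank + Fintype.card m := by
  have hA := A.mulVecLin.finrank_range_add_finrank_ker
  have hB := (A.mulVecLin.domRestrict B.mulVecLin.range).finrank_range_add_finrank_ker
  have hker : Module.finrank K (A.mulVecLin.domRestrict B.mulVecLin.range).ker ≤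
      Module.finrank K A.mulVecLin.ker := by
    rw [LinearMap.ker_domRestrict, ← Submodule.finrank_map_subtype_eq]
    exact Submodule.finrank_mono (Submodule.map_comap_le _ _)
  rw [Module.finrank_fintype_fun_eq_card] at hA
  rw [LinearMap.range_domRestrict, ← LinearMap.range_comp, ← Matrix.mulVecLin_mul] at hB
  simp only [Matrix.rank]
  omega

/-- `rank(X) + rank(Y) − D₂·E_T ≤ rank(X ∘ Y) ≤ min(rank X, rank Y)`
(the left inequality asserted after adding `D₂·E_T` to both sides), in the
Fourier-entrywise partial order on nonnegative t-scalars. -/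
theorem tmatrix_rank_mul_bounds (N : ℕ) (I : Fin N → ℕ) [∀ n, NeZero (I n)]
    (D₁ D₂ D₃ : ℕ)
    (X : Matrix (Fin D₁) (Fin D₂) (TS I)) (Y : Matrix (Fin D₂) (Fin D₃) (TS I)) :
    ∀ i, (fslice X i).rank + (fslice Y i).rank ≤ (fslice (tmul X Y) i).rank + D₂ ∧
      (fslice (tmul X Y) i).rank ≤ min ((fslice X i).rank) ((fslice Y i).rank) := by
  intro i
  rw [fslice_tmul]
  exact ⟨by simpa using Matrix.rank_add_rank_le_rank_mul_add_card (fslice X i) (fslice Y i),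
    Matrix.rank_mul_le _ _⟩
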